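/- Let u ∈ F₂ and let ψ be a chain of type (C1) containing at least ‖u‖ factors of σ. Then (i) ‖σψ(u)‖ ≥ ‖ψ(u)‖, and (ii) ‖τψ(u)‖ ≥ ‖ψ(u)‖. -/

import Mathlib

noncomputable section

/-- The free group of rank two. -/
abbrev F : Type := FreeGroup (Fin 2)

/-- The generator `a`. -/
def ga : F := FreeGroup.of 0

/-- The generator `b`. -/
def gb : F := FreeGroup.of 1

/-- Build an automorphism of `F` from images of the generators together with
an explicit inverse. -/
def mkAut (x y xi yi : F)
    (h1 : FreeGroup.lift ![xi, yi] x = ga)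
    (h2 : FreeGroup.lift ![xi, yi] y = gb)
    (h3 : FreeGroup.lift ![x, y] xi = ga)
    (h4 : FreeGroup.lift ![x, y] yi = gb) : MulAut F :=
  MonoidHom.toMulEquiv (FreeGroup.lift ![x, y]) (FreeGroup.lift ![xi, yi])
    (by
      ext i
      fin_cases i
      · simpa [ga] using h1
      · simpa [gb] using h2)
    (by
      ext i
      fin_cases i
      · simpa [ga] using h3
      · simpa [gb] using h4)

/-- `σ : a ↦ ab, b ↦ b`. -/
def σ : MulAut F :=
  mkAut (ga * gb) gb (ga * gb⁻¹) gb
    (by simp [ga, gb]) (by simp [ga, gb]) (by simp [ga, gb]) (by simp [ga, gb])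

/-- `τ : a ↦ a, b ↦ ba`. -/
def τ : MulAut F :=
  mkAut ga (gb * ga) ga (gb * ga⁻¹)
    (by simp [ga, gb]) (by simp [ga, gb]) (by simp [ga, gb]) (by simp [ga, gb])

/-- `δ₁ : a ↦ b⁻¹ab, b ↦ b`. -/
def δ₁ : MulAut F :=
  mkAut (gb⁻¹ * ga * gb) gb (gb * ga * gb⁻¹) gb
    (by simp [ga, gb, mul_assoc]) (by simp [ga, gb]) (by simp [ga, gb, mul_assoc]) (by simp [ga, gb])

/-- `δ₂ : a ↦ bab⁻¹, b ↦ b`. -/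
def δ₂ : MulAut F :=
  mkAut (gb * ga * gb⁻¹) gb (gb⁻¹ * ga * gb) gb
    (by simp [ga, gb, mul_assoc]) (by simp [ga, gb]) (by simp [ga, gb, mul_assoc]) (by simp [ga, gb])

/-- `δ₃ : a ↦ a, b ↦ a⁻¹ba`. -/
def δ₃ : MulAut F :=
  mkAut ga (ga⁻¹ * gb * ga) ga (ga * gb * ga⁻¹)
    (by simp [ga, gb]) (by simp [ga, gb, mul_assoc]) (by simp [ga, gb]) (by simp [ga, gb, mul_assoc])

/-- `δ₄ : a ↦ a, b ↦ aba⁻¹`. -/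
def δ₄ : MulAut F :=
  mkAut ga (ga * gb * ga⁻¹) ga (ga⁻¹ * gb * ga)
    (by simp [ga, gb]) (by simp [ga, gb, mul_assoc]) (by simp [ga, gb]) (by simp [ga, gb, mul_assoc])

/-- `π : a ↦ b, b ↦ a⁻¹`. -/
def pi' : MulAut F :=
  mkAut gb ga⁻¹ gb⁻¹ ga
    (by simp [ga, gb]) (by simp [ga, gb]) (by simp [ga, gb]) (by simp [ga, gb])

/-- Word length of (the reduced word representing) an element of `F`. -/
def len (w : F) : ℕ := w.toWord.length

/-- Cyclic length: minimal word length among all conjugates. -/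
def cyclen (w : F) : ℕ := sInf {n | ∃ g : F, len (g * w * g⁻¹) = n}

/-- The chain `τ^{m_k}σ^{l_k}⋯τ^{m_1}σ^{l_1}` of type (C1) determined by the list
`[(l_k, m_k), …, (l_1, m_1)]` of pairs of exponents. -/
def chainC1 (c : List (ℕ × ℕ)) : MulAut F :=
  (c.map fun p => τ ^ p.2 * σ ^ p.1).prod

/-- The chain `τ^{-m_k}σ^{-l_k}⋯τ^{-m_1}σ^{-l_1}` of type (C2) determined by the list
`[(l_k, m_k), …, (l_1, m_1)]` of pairs of exponents. -/
def chainC2 (c : List (ℕ × ℕ)) : MulAut F :=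
  (c.map fun p => (τ ^ p.2)⁻¹ * (σ ^ p.1)⁻¹).prod

/-- Number of factors of `σ` in a chain. -/
def sigmaCount (c : List (ℕ × ℕ)) : ℕ := (c.map Prod.fst).sum

/-- Number of factors of `τ` in a chain. -/
def tauCount (c : List (ℕ × ℕ)) : ℕ := (c.map Prod.snd).sum

/-- The length `Σ (l_i + m_i)` of a chain. -/
def chainLen (c : List (ℕ × ℕ)) : ℕ := sigmaCount c + tauCount c

/-- A Whitehead automorphism of type (W1): it permutes `{a, a⁻¹, b, b⁻¹}`. -/
def IsW1 (β : MulAut F) : Prop :=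
  β ga ∈ ({ga, ga⁻¹, gb, gb⁻¹} : Set F) ∧ β gb ∈ ({ga, ga⁻¹, gb, gb⁻¹} : Set F)

/-- A chain of type (C1). -/
def IsC1 (φ : MulAut F) : Prop := ∃ c : List (ℕ × ℕ), c ≠ [] ∧ φ = chainC1 c

/-- A chain of type (C2). -/
def IsC2 (φ : MulAut F) : Prop := ∃ c : List (ℕ × ℕ), c ≠ [] ∧ φ = chainC2 c

/-- A positive element: a product of the generators `a` and `b`. -/
def IsPositive (w : F) : Prop := w ∈ Submonoid.closure ({ga, gb} : Set F)

/-- The four automorphisms `δ₁, δ₂, δ₃, δ₄`. -/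
def δIdx : Fin 4 → MulAut F := ![δ₁, δ₂, δ₃, δ₄]

/-!
Read a conjugacy class `w` as a cyclically reduced closed word. Let `A` and `B` be the numbers of
its letters `a^±1` and `b^±1`, and let `P` (resp. `N`) be the number of cyclically adjacent pairs of
letters having equal sign with respect to the basis `a, b` (resp. `a, b⁻¹`). Inserting the missing
letters shows that `‖w‖ = A + B`, `‖σ w‖ = A + P`, `‖σ⁻¹ w‖ = A + N`, `‖τ w‖ = B + P` and
`‖τ⁻¹ w‖ = B + N`, while `2 A ≤ P + N` and `2 B ≤ P + N`. So for `φ = σ` and for `φ = τ` the length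
is convex along the orbits of `φ`, and the difference `‖φ w‖ - ‖φ⁻¹ w‖ = P - N`, the *excess* of
`w`, is the same. By convexity the excess does not decrease along a chain, and the cyclic length
drops at every step which leaves it negative. A chain with at least `‖u‖` factors therefore takes
`u` to an element of nonnegative excess, whose length neither `σ` nor `τ` can decrease.
-/

section CyclicallyReduced

open FreeGroup hiding map_one map_mul map_inv

theorem isCyclicallyReduced_of_append_self {α : Type*} {L : List (α × Bool)}
    (h : IsReduced (L ++ L)) : IsCyclicallyReduced L :=
  have ⟨hL, _, hjoin⟩ := List.isChain_append.1 h
  ⟨hL, hjoin⟩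

theorem isCyclicallyReduced_iff_isReduced_cons {α : Type*} {x : α × Bool} {l : List (α × Bool)}
    (hx : l.getLastD x = x) : IsCyclicallyReduced l ↔ IsReduced (x :: l) := by
  rcases List.eq_nil_or_concat l with rfl | ⟨l', y, rfl⟩
  · simp
  · obtain rfl : y = x := by simpa using hx
    simp only [isCyclicallyReduced_iff, FreeGroup.IsReduced, List.isChain_cons,
      List.concat_eq_append, List.getLast?_concat, Option.mem_some, forall_eq', and_comm]

theorem mk_singleton_not {α : Type*} (k : α) (s : Bool) :
    (mk [(k, !s)] : FreeGroup α) = (mk [(k, s)])⁻¹ := by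
  rw [inv_mk]; rfl

theorem exists_isCyclicallyReduced_isConj {α : Type*} (w : FreeGroup α) :
    ∃ L, IsCyclicallyReduced L ∧ IsConj (mk L) w := by
  classical
  refine ⟨reduceCyclically w.toWord, reduceCyclically.isCyclicallyReduced isReduced_toWord,
    isConj_iff.2 ⟨mk (reduceCyclically.conjugator w.toWord), ?_⟩⟩
  rw [inv_mk, mul_mk, mul_mk, reduceCyclically.conj_conjugator_reduceCyclically, mk_toWord]

variable {α : Type*} [DecidableEq α]

theorem freeGroup_norm_pow_le (w : FreeGroup α) (n : ℕ) : (w ^ n).norm ≤ n * w.norm := by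
  induction n with
  | zero => simp
  | succ n ih =>
    calc (w ^ (n + 1)).norm ≤ (w ^ n).norm + w.norm := by
          rw [pow_succ]; exact FreeGroup.norm_mul_le _ _
      _ ≤ (n + 1) * w.norm := by linarith

theorem norm_mk_pow_of_isCyclicallyReduced {L : List (α × Bool)} (hL : IsCyclicallyReduced L)
    (n : ℕ) : (mk L ^ n).norm = n * L.length := by
  rw [FreeGroup.norm, toWord_pow, toWord_mk, hL.isReduced.reduce_eq,
    (hL.flatten_replicate n).isReduced.reduce_eq]
  simp

-- The word lengths of the `n`-th powers differ by at most a constant, so divide by large `n`.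
theorem length_le_norm_of_isConj {L : List (α × Bool)} (hL : IsCyclicallyReduced L)
    {w : FreeGroup α} (hw : IsConj (mk L) w) : L.length ≤ w.norm := by
  obtain ⟨g, rfl⟩ := isConj_iff.1 hw
  set w := g * mk L * g⁻¹ with hw_def
  have mul_length_le (n : ℕ) : n * L.length ≤ n * w.norm + 2 * g.norm :=
    calc n * L.length = (g⁻¹ * w ^ n * g).norm := by
          rw [← norm_mk_pow_of_isCyclicallyReduced hL, hw_def, conj_pow]; group
      _ ≤ g⁻¹.norm + (w ^ n).norm + g.norm :=
          (FreeGroup.norm_mul_le _ _).trans (Nat.add_le_add_right (FreeGroup.norm_mul_le _ _) _)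
      _ ≤ n * w.norm + 2 * g.norm := by
          rw [norm_inv_eq]
          linarith [freeGroup_norm_pow_le w n]
  by_contra! hlt
  nlinarith [mul_length_le (2 * g.norm + 1)]

end CyclicallyReduced

section Transvection

open FreeGroup hiding map_one map_mul map_inv

variable {α : Type*} {e : α → Bool}

/-- The sign of a letter with respect to the basis `k ^ e k`, where an orientation `e` picks one of
the letters `k`, `k⁻¹` for every generator `k`. -/
def letterSign (e : α → Bool) (x : α × Bool) : Bool := x.2 == e x.1

theorem letterSign_mk_beq (j : α) (s : Bool) : letterSign e (j, s == e j) = s := by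
  cases s <;> cases h : e j <;> simp [letterSign, h]

theorem letterSign_not (x : α × Bool) : letterSign (fun k => !e k) x = !letterSign e x := by
  cases h : e x.1 <;> simp [letterSign, h]

theorem letterSign_eq_iff_of_fst_eq {x y : α × Bool} (h : x.1 = y.1) :
    letterSign e x = letterSign e y ↔ x.2 = y.2 := by
  rw [letterSign, letterSign, h]
  cases e y.1 <;> simp

/-- The number of pairs of consecutive letters of `x :: l` having equal sign. When `x` is the last
letter of `l`, these are the cyclically adjacent pairs of the closed word `l`. -/
def signPairCount (e : α → Bool) (x : α × Bool) (l : List (α × Bool)) : ℕ :=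
  ((x :: l).zip l).countP fun p => letterSign e p.1 = letterSign e p.2

theorem signPairCount_cons (x y : α × Bool) (l : List (α × Bool)) :
    signPairCount e x (y :: l) =
      signPairCount e y l + if letterSign e x = letterSign e y then 1 else 0 := by
  simp only [signPairCount, List.zip_cons_cons, List.countP_cons, decide_eq_true_eq]

theorem signPairCount_not (x : α × Bool) (l : List (α × Bool)) :
    signPairCount (fun k => !e k) x l = signPairCount e x l := by
  simp only [signPairCount, letterSign_not, Bool.not_inj_iff]

theorem letterSign_eq_or_letterSign_eq {e' : α → Bool} {x y : α × Bool}
    (he : (e x.1 == e' x.1) ≠ (e y.1 == e' y.1)) :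
    letterSign e x = letterSign e y ∨ letterSign e' x = letterSign e' y := by
  unfold letterSign
  generalize e x.1 = p, e' x.1 = p', e y.1 = q, e' y.1 = q', x.2 = s, y.2 = t at *
  revert p p' q q' s t
  decide

/-- The power of `j ^ e j` which the image of a letter of sign `s` passes on to the next letter. -/
def carry (e : α → Bool) (j : α) (s : Bool) : FreeGroup α :=
  bif s then mk [(j, e j)] else 1

theorem carry_mul_inv_carry_not {j : α} (s t : Bool) :
    carry e j s * (carry e j (!t))⁻¹ = mk (if s = t then [(j, t == e j)] else []) := by
  cases s <;> cases t <;> simp [carry, mk_singleton_not, ← one_eq_mk, -inv_mk]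

variable [DecidableEq α] {j : α}

theorem two_mul_countP_le_signPairCount_add {e' : α → Bool}
    (he : ∀ k ≠ j, (e k == e' k) ≠ (e j == e' j)) {x : α × Bool} {l : List (α × Bool)}
    (h : IsReduced (x :: l)) :
    2 * l.countP (fun y => y.1 = j) + (if x.1 = j then 1 else 0) ≤
      signPairCount e x l + signPairCount e' x l + if (l.getLastD x).1 = j then 1 else 0 := by
  induction l generalizing x with
  | nil => simp
  | cons y l ih =>
    rw [isReduced_cons_cons] at h
    -- Summed over the pairs of consecutive letters, this counts each letter of `j` twice.
    have hpair : (if x.1 = j then 1 else 0) + (if y.1 = j then 1 else 0) ≤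
        (if letterSign e x = letterSign e y then 1 else 0) +
          if letterSign e' x = letterSign e' y then 1 else 0 := by
      rcases eq_or_ne x.1 y.1 with hxy | hxy
      · have hsign (d : α → Bool) : letterSign d x = letterSign d y :=
          (letterSign_eq_iff_of_fst_eq hxy).2 (h.1 hxy)
        rw [if_pos (hsign e), if_pos (hsign e')]
        split_ifs <;> omega
      · have hor := letterSign_eq_or_letterSign_eq (e := e) (e' := e') (x := x) (y := y)
        grind
    have htail := ih h.2
    simp only [signPairCount_cons, List.countP_cons, List.getLastD_cons, decide_eq_true_eq]
    omega

theorem two_mul_countP_le_of_isCyclicallyReduced {e' : α → Bool}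
    (he : ∀ k ≠ j, (e k == e' k) ≠ (e j == e' j)) {x : α × Bool} {l : List (α × Bool)}
    (hx : l.getLastD x = x) (hl : IsCyclicallyReduced l) :
    2 * l.countP (fun y => y.1 = j) ≤ signPairCount e x l + signPairCount e' x l := by
  have hlinear := two_mul_countP_le_signPairCount_add he
    ((isCyclicallyReduced_iff_isReduced_cons hx).1 hl)
  rw [hx] at hlinear
  omega

/-- What a letter `y` preceded by `x` contributes to the reduced image under a transvection: the
letter of `j` having the common sign of `x` and `y`, if there is one, and then `y`, unless `y` is
itself a letter of `j`. -/
def transvectionBlock (e : α → Bool) (j : α) (x y : α × Bool) : List (α × Bool) :=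
  (if letterSign e x = letterSign e y then [(j, letterSign e y == e j)] else []) ++
    if y.1 = j then [] else [y]

/-- The reduced image of a word under a transvection, given the letter that precedes the word. -/
def transvectionWord (e : α → Bool) (j : α) : α × Bool → List (α × Bool) → List (α × Bool)
  | _, [] => []
  | x, y :: l => transvectionBlock e j x y ++ transvectionWord e j y l

theorem transvectionWord_append (x : α × Bool) (l m : List (α × Bool)) :
    transvectionWord e j x (l ++ m) =
      transvectionWord e j x l ++ transvectionWord e j (l.getLastD x) m := by
  induction l generalizing x with
  | nil => rfl
  | cons y l ih =>
    simp only [List.cons_append, transvectionWord, ih, List.getLastD_cons, List.append_assoc]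

theorem length_transvectionWord (x : α × Bool) (l : List (α × Bool)) :
    (transvectionWord e j x l).length = l.countP (fun y => y.1 ≠ j) + signPairCount e x l := by
  induction l generalizing x with
  | nil => rfl
  | cons y l ih =>
    simp only [transvectionWord, transvectionBlock, List.length_append, ih, List.countP_cons,
      signPairCount_cons]
    grind

theorem fst_eq_of_mem_head?_transvectionWord {x : α × Bool} {l : List (α × Bool)}
    (h : IsReduced (x :: l)) (hx : x.1 = j) {z : α × Bool}
    (hz : z ∈ (transvectionWord e j x l).head?) (hsign : letterSign e x = letterSign e z) :
    z.1 = j := by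
  cases l with
  | nil => simp [transvectionWord] at hz
  | cons y l =>
    have hxy (hy : y.1 = j) : letterSign e x = letterSign e y :=
      (letterSign_eq_iff_of_fst_eq (hx.trans hy.symm)).2
        ((isReduced_cons_cons.1 h).1 (hx.trans hy.symm))
    grind [transvectionWord, transvectionBlock]

theorem isReduced_cons_transvectionWord {x : α × Bool} {l : List (α × Bool)}
    (h : IsReduced (x :: l)) : IsReduced (x :: transvectionWord e j x l) := by
  induction l generalizing x with
  | nil => simp [transvectionWord]
  | cons y l ih =>
    obtain ⟨hxy, hl⟩ := isReduced_cons_cons.1 h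
    have hy := ih hl
    simp only [transvectionWord, transvectionBlock]
    split_ifs with hsign hyj hyj
    · have heq : (j, letterSign e y == e j) = y :=
        Prod.ext hyj.symm ((letterSign_eq_iff_of_fst_eq hyj.symm).1 (letterSign_mk_beq j _))
      rw [heq]
      exact isReduced_cons_cons.2 ⟨hxy, hy⟩
    · refine isReduced_cons_cons.2 ⟨fun hxj => ?_, isReduced_cons_cons.2 ⟨fun hjy => ?_, hy⟩⟩
      · exact (letterSign_eq_iff_of_fst_eq hxj).1 (hsign.trans (letterSign_mk_beq j _).symm)
      · exact absurd hjy.symm hyj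
    · have hxj : x.1 ≠ j := fun hxj => hsign
        ((letterSign_eq_iff_of_fst_eq (hxj.trans hyj.symm)).2 (hxy (hxj.trans hyj.symm)))
      refine List.isChain_cons.2 ⟨fun z hz hxz => ?_, List.IsChain.of_cons hy⟩
      have hyz : letterSign e y ≠ letterSign e z := fun hyz =>
        hxj (hxz.trans (fst_eq_of_mem_head?_transvectionWord hl hyj hz hyz))
      rw [← letterSign_eq_iff_of_fst_eq (e := e) hxz, Bool.eq_not_of_ne hsign,
        Bool.eq_not_of_ne hyz, Bool.not_not]
    · exact isReduced_cons_cons.2 ⟨hxy, hy⟩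

/-- The automorphism `φ` fixes the element `j ^ e j` of the basis given by the orientation `e` and
multiplies every other one by it on the right. -/
def IsTransvection (e : α → Bool) (j : α) (φ : MulAut (FreeGroup α)) : Prop :=
  ∀ k, φ (mk [(k, e k)]) = mk ((if k = j then [] else [(k, e k)]) ++ [(j, e j)])

theorem IsTransvection.map_letter {φ : MulAut (FreeGroup α)} (hφ : IsTransvection e j φ)
    (y : α × Bool) :
    φ (mk [y]) = (carry e j (!letterSign e y))⁻¹ *
      (mk (if y.1 = j then [] else [y]) * carry e j (letterSign e y)) := by
  obtain ⟨k, s⟩ := y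
  obtain rfl | rfl := Bool.eq_or_eq_not s (e k)
  · have hsign : letterSign e (k, e k) = true := by simp [letterSign]
    simp only [hφ k, hsign, carry, Bool.not_true, cond_true, cond_false, inv_one,
      one_mul, mul_mk]
  · have hsign : letterSign e (k, !e k) = false := by simp [letterSign]
    have hkeep : mk (if k = j then [] else [(k, !e k)]) =
        (mk (if k = j then [] else [(k, e k)]))⁻¹ := by
      split_ifs
      · rw [← one_eq_mk, inv_one]
      · rw [mk_singleton_not]
    rw [mk_singleton_not, map_inv, hφ, ← mul_mk, mul_inv_rev, hkeep]
    simp only [hsign, carry, Bool.not_false, cond_true, cond_false, mul_one]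

theorem IsTransvection.carry_mul_map_mk {φ : MulAut (FreeGroup α)}
    (hφ : IsTransvection e j φ) (x : α × Bool) (l : List (α × Bool)) :
    carry e j (letterSign e x) * φ (mk l) =
      mk (transvectionWord e j x l) * carry e j (letterSign e (l.getLastD x)) := by
  induction l generalizing x with
  | nil => rw [transvectionWord, ← one_eq_mk, map_one, mul_one, one_mul, List.getLastD_nil]
  | cons y l ih =>
    have hblock : carry e j (letterSign e x) * φ (mk [y]) =
        mk (transvectionBlock e j x y) * carry e j (letterSign e y) := by
      rw [hφ.map_letter, ← mul_assoc, carry_mul_inv_carry_not, ← mul_assoc, mul_mk,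
        transvectionBlock]
    calc carry e j (letterSign e x) * φ (mk (y :: l))
        = carry e j (letterSign e x) * φ (mk [y]) * φ (mk l) := by
          rw [mul_assoc, ← map_mul φ, mul_mk, List.singleton_append]
      _ = mk (transvectionBlock e j x y) * (carry e j (letterSign e y) * φ (mk l)) := by
          rw [hblock, mul_assoc]
      _ = mk (transvectionWord e j x (y :: l)) *
          carry e j (letterSign e ((y :: l).getLastD x)) := by
          rw [ih, ← mul_assoc, mul_mk, List.getLastD_cons, transvectionWord]

theorem IsTransvection.isConj_transvectionWord {φ : MulAut (FreeGroup α)}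
    (hφ : IsTransvection e j φ) {x : α × Bool} {l : List (α × Bool)} (hx : l.getLastD x = x) :
    IsConj (mk (transvectionWord e j x l)) (φ (mk l)) := by
  refine isConj_iff.2 ⟨(carry e j (letterSign e x))⁻¹, ?_⟩
  have hcarry := hφ.carry_mul_map_mk x l
  rw [hx] at hcarry
  rw [inv_inv, mul_assoc, ← hcarry, inv_mul_cancel_left]

theorem isCyclicallyReduced_transvectionWord {x : α × Bool} {l : List (α × Bool)}
    (hx : l.getLastD x = x) (hl : IsCyclicallyReduced l) :
    IsCyclicallyReduced (transvectionWord e j x l) := by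
  rcases eq_or_ne l [] with rfl | hne
  · exact .nil
  have hll : IsReduced (l ++ l) := by simpa using (hl.flatten_replicate 2).isReduced
  have hxll : IsReduced ([x] ++ l ++ l) :=
    ((isCyclicallyReduced_iff_isReduced_cons hx).1 hl).append_overlap hll hne
  apply isCyclicallyReduced_of_append_self
  nth_rewrite 2 [← hx]
  rw [← transvectionWord_append]
  exact List.IsChain.of_cons (isReduced_cons_transvectionWord hxll)

end Transvection

section CyclicLength

open FreeGroup hiding map_one map_mul map_inv

theorem cyclen_eq_length {L : List (Fin 2 × Bool)} (hL : IsCyclicallyReduced L) {w : F}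
    (hw : IsConj (mk L) w) : cyclen w = L.length := by
  refine le_antisymm ?_ (le_csInf ⟨_, 1, rfl⟩ ?_)
  · obtain ⟨g, hg⟩ := isConj_iff.1 hw.symm
    calc cyclen w ≤ len (g * w * g⁻¹) := Nat.sInf_le ⟨g, rfl⟩
      _ ≤ L.length := by rw [hg]; exact norm_mk_le
  · rintro _ ⟨g, rfl⟩
    exact length_le_norm_of_isConj hL (hw.trans (isConj_iff.2 ⟨g, rfl⟩))

theorem eq_one_of_cyclen_eq_zero {w : F} (h : cyclen w = 0) : w = 1 := by
  obtain ⟨L, hL, hw⟩ := exists_isCyclicallyReduced_isConj w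
  rw [cyclen_eq_length hL hw, List.length_eq_zero_iff] at h
  subst h
  exact isConj_one_right.1 hw

theorem IsTransvection.cyclen_apply {e : Fin 2 → Bool} {j : Fin 2} {φ : MulAut F}
    (hφ : IsTransvection e j φ) {x : Fin 2 × Bool} {l : List (Fin 2 × Bool)}
    (hx : l.getLastD x = x) (hl : IsCyclicallyReduced l) {w : F} (hw : IsConj (mk l) w) :
    cyclen (φ w) = l.countP (fun y => y.1 ≠ j) + signPairCount e x l := by
  have hφw : IsConj (φ (mk l)) (φ w) := φ.toMonoidHom.map_isConj hw
  rw [cyclen_eq_length (isCyclicallyReduced_transvectionWord hx hl)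
    ((hφ.isConj_transvectionWord hx).trans hφw), length_transvectionWord]

theorem isTransvection_σ : IsTransvection (fun _ => true) 1 σ := by
  intro k
  fin_cases k <;> simp [σ, mkAut, ga, gb, of, mul_mk]

theorem isTransvection_τ : IsTransvection (fun _ => true) 0 τ := by
  intro k
  fin_cases k <;> simp [τ, mkAut, ga, gb, of, mul_mk]

theorem isTransvection_σ_inv : IsTransvection ![true, false] 1 σ⁻¹ := by
  intro k
  fin_cases k <;> simp [σ, mkAut, ga, gb, of, invRev]

theorem isTransvection_τ_inv : IsTransvection ![false, true] 0 τ⁻¹ := by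
  intro k
  fin_cases k <;> simp [τ, mkAut, ga, gb, of, invRev]

theorem exists_getLastD_eq_self {β : Type*} [Nonempty β] (l : List β) :
    ∃ x, l.getLastD x = x := by
  rcases List.eq_nil_or_concat l with rfl | ⟨l, x, rfl⟩
  · exact ⟨Classical.arbitrary β, rfl⟩
  · exact ⟨x, by simp⟩

theorem exists_cyclen_eq_add (w : F) : ∃ A B P N : ℕ, 2 * A ≤ P + N ∧ 2 * B ≤ P + N ∧
    cyclen w = A + B ∧ cyclen (σ w) = A + P ∧ cyclen (σ⁻¹ w) = A + N ∧
      cyclen (τ w) = B + P ∧ cyclen (τ⁻¹ w) = B + N := by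
  obtain ⟨l, hl, hw⟩ := exists_isCyclicallyReduced_isConj w
  obtain ⟨x, hx⟩ := exists_getLastD_eq_self l
  have hle (j : Fin 2) : 2 * l.countP (fun y => y.1 = j) ≤
      signPairCount (fun _ => true) x l + signPairCount ![true, false] x l :=
    two_mul_countP_le_of_isCyclicallyReduced (by fin_cases j <;> decide) hx hl
  have hnot : (![false, true] : Fin 2 → Bool) = fun k => !(![true, false] k) := by decide
  have hcount_zero : l.countP (fun y => y.1 ≠ 0) = l.countP (fun y => y.1 = 1) := by
    congr! 3
    omega
  have hcount_one : l.countP (fun y => y.1 ≠ 1) = l.countP (fun y => y.1 = 0) := by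
    congr! 3
    omega
  refine ⟨_, _, _, _, hle 0, hle 1, ?_, ?_, ?_, ?_, ?_⟩
  · rw [cyclen_eq_length hl hw, ← hcount_zero]
    simpa using l.length_eq_countP_add_countP fun y => decide (y.1 = 0)
  · rw [isTransvection_σ.cyclen_apply hx hl hw, hcount_one]
  · rw [isTransvection_σ_inv.cyclen_apply hx hl hw, hcount_one]
  · rw [isTransvection_τ.cyclen_apply hx hl hw, hcount_zero]
  · rw [isTransvection_τ_inv.cyclen_apply hx hl hw, hcount_zero, hnot, signPairCount_not]

end CyclicLength

section Excess

/-- The increase `‖σ w‖ - ‖σ⁻¹ w‖` of the cyclic length, the quantity that chains cannot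
decrease. -/
def excess (w : F) : ℤ := cyclen (σ w) - cyclen (σ⁻¹ w)

theorem cyclen_sub_cyclen_inv_eq_excess {φ : MulAut F} (hφ : φ = σ ∨ φ = τ) (w : F) :
    (cyclen (φ w) : ℤ) - cyclen (φ⁻¹ w) = excess w := by
  obtain ⟨A, B, P, N, -, -, -, hσ, hσ', hτ, hτ'⟩ := exists_cyclen_eq_add w
  rcases hφ with rfl | rfl
  · rfl
  · rw [excess]; omega

theorem two_mul_cyclen_le {φ : MulAut F} (hφ : φ = σ ∨ φ = τ) (w : F) :
    2 * cyclen w ≤ cyclen (φ w) + cyclen (φ⁻¹ w) := by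
  obtain ⟨A, B, P, N, hA, hB, hw, hσ, hσ', hτ, hτ'⟩ := exists_cyclen_eq_add w
  rcases hφ with rfl | rfl <;> omega

theorem cyclen_le_cyclen_of_excess_nonneg {φ : MulAut F} (hφ : φ = σ ∨ φ = τ) {w : F}
    (hw : 0 ≤ excess w) : cyclen w ≤ cyclen (φ w) := by
  have hexcess := cyclen_sub_cyclen_inv_eq_excess hφ w
  have hconvex := two_mul_cyclen_le hφ w
  omega

theorem excess_apply {φ : MulAut F} (hφ : φ = σ ∨ φ = τ) (w : F) :
    excess (φ w) = cyclen (φ (φ w)) - cyclen w := by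
  rw [← cyclen_sub_cyclen_inv_eq_excess hφ, MulAut.inv_apply_self]

theorem excess_le_excess_apply {φ : MulAut F} (hφ : φ = σ ∨ φ = τ) (w : F) :
    excess w ≤ excess (φ w) := by
  have hexcess := cyclen_sub_cyclen_inv_eq_excess hφ w
  have hexcess_apply := excess_apply hφ w
  have hconvex := two_mul_cyclen_le hφ w
  have hconvex_apply := two_mul_cyclen_le hφ (φ w)
  rw [MulAut.inv_apply_self] at hconvex_apply
  omega

theorem excess_apply_nonneg_or_cyclen_apply_lt {φ : MulAut F} (hφ : φ = σ ∨ φ = τ) (w : F) :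
    0 ≤ excess (φ w) ∨ cyclen (φ w) < cyclen w := by
  have hexcess_apply := excess_apply hφ w
  have hconvex_apply := two_mul_cyclen_le hφ (φ w)
  rw [MulAut.inv_apply_self] at hconvex_apply
  omega

theorem excess_nonneg_or_cyclen_add_length_le (u : F) {L : List (MulAut F)}
    (hL : ∀ φ ∈ L, φ = σ ∨ φ = τ) :
    0 ≤ excess (L.prod u) ∨ cyclen (L.prod u) + L.length ≤ cyclen u := by
  induction L with
  | nil => exact .inr le_rfl
  | cons φ L ih =>
    obtain ⟨hφ, hL⟩ := List.forall_mem_cons.1 hL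
    rw [List.prod_cons, MulAut.mul_apply, List.length_cons]
    have hmono := excess_le_excess_apply hφ (L.prod u)
    have hdrop := excess_apply_nonneg_or_cyclen_apply_lt hφ (L.prod u)
    have hprod := ih hL
    omega

theorem excess_one : excess 1 = 0 := by
  rw [excess, map_one, map_one, sub_self]

theorem excess_prod_nonneg {u : F} {L : List (MulAut F)} (hL : ∀ φ ∈ L, φ = σ ∨ φ = τ)
    (hu : cyclen u ≤ L.length) : 0 ≤ excess (L.prod u) := by
  rcases excess_nonneg_or_cyclen_add_length_le u hL with h | h
  · exact h
  · rw [eq_one_of_cyclen_eq_zero (w := L.prod u) (by omega), excess_one]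

theorem exists_prod_eq_chainC1 (c : List (ℕ × ℕ)) :
    ∃ L : List (MulAut F), (∀ φ ∈ L, φ = σ ∨ φ = τ) ∧ L.length = chainLen c ∧
      L.prod = chainC1 c := by
  refine ⟨c.flatMap fun p => List.replicate p.2 τ ++ List.replicate p.1 σ, ?_, ?_, ?_⟩
  · simp only [List.mem_flatMap, List.mem_append, List.mem_replicate]
    grind
  · induction c with
    | nil => rfl
    | cons p c ih =>
      simp only [chainLen, sigmaCount, tauCount, List.flatMap_cons, List.length_append,
        List.length_replicate, List.map_cons, List.sum_cons] at ih ⊢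
      omega
  · induction c with
    | nil => rfl
    | cons p c ih =>
      rw [List.flatMap_cons, List.prod_append, ih, List.prod_append, List.prod_replicate,
        List.prod_replicate, chainC1, chainC1, List.map_cons, List.prod_cons]

end Excess

theorem stmt5_general (u : F) (c : List (ℕ × ℕ)) (hc : cyclen u ≤ chainLen c) :
    cyclen (chainC1 c u) ≤ cyclen (σ (chainC1 c u)) ∧
    cyclen (chainC1 c u) ≤ cyclen (τ (chainC1 c u)) := by
  obtain ⟨L, hL, hlen, hprod⟩ := exists_prod_eq_chainC1 c
  have hexcess : 0 ≤ excess (chainC1 c u) := hprod ▸ excess_prod_nonneg hL (hlen ▸ hc)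
  exact ⟨cyclen_le_cyclen_of_excess_nonneg (.inl rfl) hexcess,
    cyclen_le_cyclen_of_excess_nonneg (.inr rfl) hexcess⟩

/-- Lemma 4.3: applying `σ` or `τ` to a chain with at least `‖u‖` factors of `σ`
does not decrease the cyclic length. -/
theorem stmt5 (u : F) (c : List (ℕ × ℕ)) (hne : c ≠ [])
    (hσ : cyclen u ≤ sigmaCount c) :
    cyclen (chainC1 c u) ≤ cyclen (σ (chainC1 c u)) ∧
    cyclen (chainC1 c u) ≤ cyclen (τ (chainC1 c u)) :=
  stmt5_general u c (hσ.trans (Nat.le_add_right _ _))
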